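/- arXiv:2401.12602 — 6 statements merged into one kernel-verified Lean document; each statement's English description precedes it below -/
import Mathlib

section
/- Let A be an invertible n×n real matrix, A_Γ an n×m real matrix and R_Γ an m×n real matrix, and set M = R_Γ·A⁻¹·A_Γ. If X and Y are n×m real matrices satisfying the block lower-triangular system A·X = A_Γ and −A_Γ·R_Γ·X + A·Y = A_Γ (i.e. [[A, 0], [−A_Γ·R_Γ, A]]·[X; Y] = [A_Γ; A_Γ]), then the ICDD Schur complement matrix defined by S = I_m + R_Γ·(X − Y) equals I_m − M². -/
open Matrix

theorem icdd_schur_complement_eq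
    {n m : Type*} [Fintype n] [Fintype m] [DecidableEq n] [DecidableEq m]
    (A : Matrix n n ℝ) (AΓ : Matrix n m ℝ) (RΓ : Matrix m n ℝ)
    (hA : IsUnit A.det)
    (M : Matrix m m ℝ) (hM : M = RΓ * A⁻¹ * AΓ)
    (X Y : Matrix n m ℝ)
    (hX : A * X = AΓ)
    (hY : -(AΓ * RΓ * X) + A * Y = AΓ)
    (S : Matrix m m ℝ) (hS : S = 1 + RΓ * (X - Y)) :
    S = 1 - M ^ 2 := by
  have h1 : X = A⁻¹ * AΓ := by
    rw [← hX, Matrix.nonsing_inv_mul_cancel_left _ _ hA]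
  have h2 : M = RΓ * X := by rw [hM, h1, Matrix.mul_assoc]
  have h3 : A * Y = AΓ + AΓ * M := by
    rw [h2, ← Matrix.mul_assoc]
    nth_rewrite 1 [← hY]
    abel
  have h4 : Y = X + X * M := by
    rw [← Matrix.nonsing_inv_mul_cancel_left A Y hA, h3, Matrix.mul_add, ← Matrix.mul_assoc, ← h1]
  have h5 : X - Y = -(X * M) := by rw [h4]; abel
  rw [hS, h5, Matrix.mul_neg, ← Matrix.mul_assoc, ← h2, pow_two, sub_eq_add_neg]
end

section
/- Let A be an invertible n×n real matrix, A_Γ an n×m real matrix, R_Γ an m×n real matrix, M = R_Γ·A⁻¹·A_Γ, and F : n → ℝ. If the vectors U, W ∈ ℝⁿ and g ∈ ℝᵐ satisfy the compact ICDD optimality system A·U + A_Γ·g = F, −A_Γ·(R_Γ·U) + A·W + A_Γ·g = 0, and −R_Γ·U + R_Γ·W + g = 0, then g satisfies the Schur complement system (I_m − M²)·g = (I_m − M)·R_Γ·A⁻¹·F. -/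
open Matrix

theorem icdd_optimality_implies_schur
    {n m : Type*} [Fintype n] [Fintype m] [DecidableEq n] [DecidableEq m]
    (A : Matrix n n ℝ) (AΓ : Matrix n m ℝ) (RΓ : Matrix m n ℝ)
    (hA : IsUnit A.det)
    (M : Matrix m m ℝ) (hM : M = RΓ * A⁻¹ * AΓ)
    (F : n → ℝ) (U W : n → ℝ) (g : m → ℝ)
    (h1 : A.mulVec U + AΓ.mulVec g = F)
    (h2 : -(AΓ.mulVec (RΓ.mulVec U)) + A.mulVec W + AΓ.mulVec g = 0)
    (h3 : -(RΓ.mulVec U) + RΓ.mulVec W + g = 0) :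
    (1 - M ^ 2).mulVec g = ((1 - M) * RΓ * A⁻¹).mulVec F := by
  have hAv : ∀ v : n → ℝ, (RΓ * A⁻¹).mulVec (A.mulVec v) = RΓ.mulVec v := by
    intro v
    rw [Matrix.mulVec_mulVec, Matrix.mul_assoc, Matrix.nonsing_inv_mul A hA, Matrix.mul_one]
  have hMv : ∀ v : m → ℝ, (RΓ * A⁻¹).mulVec (AΓ.mulVec v) = M.mulVec v := by
    intro v
    rw [Matrix.mulVec_mulVec, hM]
  have e1 : (RΓ * A⁻¹).mulVec F = RΓ.mulVec U + M.mulVec g := by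
    rw [← h1, Matrix.mulVec_add, hAv, hMv]
  have e2 : -(M.mulVec (RΓ.mulVec U)) + RΓ.mulVec W + M.mulVec g = 0 := by
    have h := congrArg (fun v => (RΓ * A⁻¹).mulVec v) h2
    simpa only [Matrix.mulVec_add, Matrix.mulVec_neg, hAv, hMv, Matrix.mulVec_zero] using h
  rw [Matrix.mul_assoc, ← Matrix.mulVec_mulVec, e1, pow_two, Matrix.sub_mulVec,
    Matrix.sub_mulVec, Matrix.one_mulVec, Matrix.one_mulVec, Matrix.mulVec_add,
    ← Matrix.mulVec_mulVec]
  funext i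
  have a := congrFun e2 i
  have b := congrFun h3 i
  simp only [Pi.add_apply, Pi.sub_apply, Pi.neg_apply, Pi.zero_apply] at a b ⊢
  linarith
end

section
/- Let A be an invertible n×n real matrix, A_Γ an n×m real matrix, R_Γ an m×n real matrix, M = R_Γ·A⁻¹·A_Γ, and F : n → ℝ. If g ∈ ℝᵐ satisfies the Schur complement system (I_m − M²)·g = (I_m − M)·R_Γ·A⁻¹·F, then the vectors obtained by back-substitution, U := A⁻¹·(F − A_Γ·g) and W := A⁻¹·(A_Γ·(R_Γ·U − g)), satisfy the compact ICDD optimality system: A·U + A_Γ·g = F, −A_Γ·(R_Γ·U) + A·W + A_Γ·g = 0, and −R_Γ·U + R_Γ·W + g = 0. -/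
open Matrix

theorem icdd_schur_implies_optimality
    {n m : Type*} [Fintype n] [Fintype m] [DecidableEq n] [DecidableEq m]
    (A : Matrix n n ℝ) (AΓ : Matrix n m ℝ) (RΓ : Matrix m n ℝ)
    (hA : IsUnit A.det)
    (M : Matrix m m ℝ) (hM : M = RΓ * A⁻¹ * AΓ)
    (F : n → ℝ) (g : m → ℝ)
    (hg : (1 - M ^ 2).mulVec g = ((1 - M) * RΓ * A⁻¹).mulVec F)
    (U W : n → ℝ)
    (hU : U = A⁻¹.mulVec (F - AΓ.mulVec g))
    (hW : W = A⁻¹.mulVec (AΓ.mulVec (RΓ.mulVec U - g))) :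
    A.mulVec U + AΓ.mulVec g = F ∧
    -(AΓ.mulVec (RΓ.mulVec U)) + A.mulVec W + AΓ.mulVec g = 0 ∧
    -(RΓ.mulVec U) + RΓ.mulVec W + g = 0 := by
  have hAA : ∀ v : n → ℝ, A.mulVec (A⁻¹.mulVec v) = v := fun v => by
    rw [Matrix.mulVec_mulVec, Matrix.mul_nonsing_inv A hA, Matrix.one_mulVec]
  have hMv : ∀ v : m → ℝ, RΓ.mulVec (A⁻¹.mulVec (AΓ.mulVec v)) = M.mulVec v := fun v => by
    rw [hM, Matrix.mulVec_mulVec, Matrix.mulVec_mulVec, Matrix.mul_assoc]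
  have hRU : RΓ.mulVec U = RΓ.mulVec (A⁻¹.mulVec F) - M.mulVec g := by
    rw [hU, Matrix.mulVec_sub, Matrix.mulVec_sub, hMv]
  refine ⟨?_, ?_, ?_⟩
  · rw [hU, hAA]; abel
  · rw [hW, hAA, Matrix.mulVec_sub]; abel
  · rw [hW, hMv, hRU]
    rw [Matrix.sub_mulVec, Matrix.one_mulVec, pow_two, ← Matrix.mulVec_mulVec,
      ← Matrix.mulVec_mulVec, ← Matrix.mulVec_mulVec, Matrix.sub_mulVec, Matrix.one_mulVec] at hg
    rw [Matrix.mulVec_sub, Matrix.mulVec_sub]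
    rw [← sub_eq_zero] at hg
    rw [← hg]; abel
end

section
/- Let A be an invertible n×n real matrix, A_Γ an n×m real matrix, R_Γ an m×n real matrix, and M = R_Γ·A⁻¹·A_Γ. Then the following are equivalent: (i) for every data vector F : n → ℝ the compact ICDD optimality system A·U + A_Γ·g = F, −A_Γ·(R_Γ·U) + A·W + A_Γ·g = 0, −R_Γ·U + R_Γ·W + g = 0 has a unique solution (U, W, g) ∈ ℝⁿ × ℝⁿ × ℝᵐ; (ii) the Schur complement matrix S = I_m − M² is invertible. -/
open Matrix

theorem icdd_key
    {n m : Type*} [Fintype n] [Fintype m] [DecidableEq n] [DecidableEq m]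
    (A : Matrix n n ℝ) (AΓ : Matrix n m ℝ) (RΓ : Matrix m n ℝ)
    (hA : IsUnit A.det)
    (M : Matrix m m ℝ) (hM : M = RΓ * A⁻¹ * AΓ) (F U W : n → ℝ) (g : m → ℝ) :
    (A.mulVec U + AΓ.mulVec g = F ∧
        -(AΓ.mulVec (RΓ.mulVec U)) + A.mulVec W + AΓ.mulVec g = 0 ∧
        -(RΓ.mulVec U) + RΓ.mulVec W + g = 0) ↔
    (U = A⁻¹ *ᵥ (F - AΓ *ᵥ g) ∧ W = A⁻¹ *ᵥ (AΓ *ᵥ (RΓ *ᵥ U) - AΓ *ᵥ g) ∧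
      (1 - M ^ 2) *ᵥ g = (1 - M) *ᵥ (RΓ *ᵥ (A⁻¹ *ᵥ F))) := by
  have hs : ∀ x y : n → ℝ, A *ᵥ x = y ↔ x = A⁻¹ *ᵥ y := by
    intro x y
    constructor
    · rintro rfl
      rw [mulVec_mulVec, nonsing_inv_mul _ hA, one_mulVec]
    · rintro rfl
      rw [mulVec_mulVec, mul_nonsing_inv _ hA, one_mulVec]
  have hMv : ∀ v, RΓ *ᵥ (A⁻¹ *ᵥ (AΓ *ᵥ v)) = M *ᵥ v := by
    intro v
    rw [hM, mulVec_mulVec, mulVec_mulVec, Matrix.mul_assoc]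
  rw [← hs, ← hs, eq_sub_iff_add_eq]
  refine and_congr_right fun h1 => ?_
  have e2 : (-(AΓ *ᵥ (RΓ *ᵥ U)) + A *ᵥ W + AΓ *ᵥ g = 0) ↔
      A *ᵥ W = AΓ *ᵥ (RΓ *ᵥ U) - AΓ *ᵥ g := by
    constructor
    · intro h
      rw [← sub_eq_zero, ← h]; abel
    · intro h
      rw [h]; abel
  rw [e2]
  refine and_congr_right fun h2 => ?_
  rw [← eq_sub_iff_add_eq, hs] at h1
  rw [hs] at h2
  have hU : RΓ *ᵥ U = RΓ *ᵥ (A⁻¹ *ᵥ F) - M *ᵥ g := by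
    rw [h1, mulVec_sub, mulVec_sub, hMv]
  have hW : RΓ *ᵥ W = M *ᵥ (RΓ *ᵥ U) - M *ᵥ g := by
    rw [h2, mulVec_sub, mulVec_sub, hMv, hMv]
  rw [hW, hU, ← sub_eq_zero (a := (1 - M ^ 2) *ᵥ g)]
  have : -(RΓ *ᵥ (A⁻¹ *ᵥ F) - M *ᵥ g) + (M *ᵥ (RΓ *ᵥ (A⁻¹ *ᵥ F) - M *ᵥ g) - M *ᵥ g) + g
      = (1 - M ^ 2) *ᵥ g - (1 - M) *ᵥ (RΓ *ᵥ (A⁻¹ *ᵥ F)) := by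
    rw [sub_mulVec, sub_mulVec, one_mulVec, one_mulVec, pow_two, mulVec_sub,
      ← mulVec_mulVec g M M]
    abel
  rw [this]

theorem icdd_unique_solvability_iff_schur_invertible
    {n m : Type*} [Fintype n] [Fintype m] [DecidableEq n] [DecidableEq m]
    (A : Matrix n n ℝ) (AΓ : Matrix n m ℝ) (RΓ : Matrix m n ℝ)
    (hA : IsUnit A.det)
    (M : Matrix m m ℝ) (hM : M = RΓ * A⁻¹ * AΓ) :
    (∀ F : n → ℝ, ∃! UWg : (n → ℝ) × (n → ℝ) × (m → ℝ),
        A.mulVec UWg.1 + AΓ.mulVec UWg.2.2 = F ∧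
        -(AΓ.mulVec (RΓ.mulVec UWg.1)) + A.mulVec UWg.2.1 + AΓ.mulVec UWg.2.2 = 0 ∧
        -(RΓ.mulVec UWg.1) + RΓ.mulVec UWg.2.1 + UWg.2.2 = 0) ↔
    IsUnit (1 - M ^ 2) := by
  simp only [icdd_key A AΓ RΓ hA M hM]
  constructor
  · intro h
    rw [← mulVec_injective_iff_isUnit]
    intro x y hxy
    have hz : (1 - M ^ 2) *ᵥ (x - y) = 0 := by
      rw [mulVec_sub]; exact sub_eq_zero.2 hxy
    have := (h 0).unique (y₁ := (A⁻¹ *ᵥ (0 - AΓ *ᵥ (x - y)), A⁻¹ *ᵥ (AΓ *ᵥ (RΓ *ᵥ (A⁻¹ *ᵥ (0 - AΓ *ᵥ (x - y)))) - AΓ *ᵥ (x - y)), (x - y))) (y₂ := (0, 0, 0))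
      ⟨rfl, rfl, by simp [hz]⟩ (by simp)
    have h3 := congrArg (fun p => p.2.2) this
    exact sub_eq_zero.1 h3
  · intro h F
    have hd := (isUnit_iff_isUnit_det _).1 h
    obtain ⟨g₀, hg₀⟩ : ∃ g₀, g₀ = (1 - M ^ 2)⁻¹ *ᵥ ((1 - M) *ᵥ (RΓ *ᵥ (A⁻¹ *ᵥ F))) := ⟨_, rfl⟩
    refine ⟨(A⁻¹ *ᵥ (F - AΓ *ᵥ g₀), A⁻¹ *ᵥ (AΓ *ᵥ (RΓ *ᵥ (A⁻¹ *ᵥ (F - AΓ *ᵥ g₀))) - AΓ *ᵥ g₀), g₀), ⟨rfl, rfl, ?_⟩, ?_⟩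
    · dsimp only
      rw [hg₀, mulVec_mulVec, mul_nonsing_inv _ hd, one_mulVec]
    · rintro ⟨U, W, g⟩ ⟨h1, h2, h3⟩
      dsimp only at h1 h2 h3
      have hg : g = g₀ := by
        rw [hg₀, ← h3, mulVec_mulVec, nonsing_inv_mul _ hd, one_mulVec]
      rw [← hg, h2, h1]
end

section
/- Let A be an invertible n×n real matrix, A_Γ an n×m real matrix, R_Γ an m×n real matrix, M = R_Γ·A⁻¹·A_Γ, and F : n → ℝ. Assume that I_m − M is invertible. If (U, W, g) ∈ ℝⁿ × ℝⁿ × ℝᵐ satisfies the compact ICDD optimality system A·U + A_Γ·g = F, −A_Γ·(R_Γ·U) + A·W + A_Γ·g = 0, −R_Γ·U + R_Γ·W + g = 0, then the dual state vanishes, W = 0, and (U, g) satisfies the reduced coupled system A·U + A_Γ·g = F and g = R_Γ·U. -/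
open Matrix

theorem icdd_optimality_dual_vanishes
    {n m : Type*} [Fintype n] [Fintype m] [DecidableEq n] [DecidableEq m]
    (A : Matrix n n ℝ) (AΓ : Matrix n m ℝ) (RΓ : Matrix m n ℝ)
    (hA : IsUnit A.det)
    (M : Matrix m m ℝ) (hM : M = RΓ * A⁻¹ * AΓ)
    (hIM : IsUnit (1 - M))
    (F : n → ℝ) (U W : n → ℝ) (g : m → ℝ)
    (h1 : A.mulVec U + AΓ.mulVec g = F)
    (h2 : -(AΓ.mulVec (RΓ.mulVec U)) + A.mulVec W + AΓ.mulVec g = 0)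
    (h3 : -(RΓ.mulVec U) + RΓ.mulVec W + g = 0) :
    W = 0 ∧ A.mulVec U + AΓ.mulVec g = F ∧ g = RΓ.mulVec U := by
  have e3 : RΓ *ᵥ W = RΓ *ᵥ U - g := by
    have h : RΓ *ᵥ W - (RΓ *ᵥ U - g) = 0 := by rw [← h3]; abel
    exact sub_eq_zero.mp h
  have e2 : A *ᵥ W = AΓ *ᵥ (RΓ *ᵥ W) := by
    have h : A *ᵥ W - AΓ *ᵥ (RΓ *ᵥ W) = 0 := by
      rw [e3, Matrix.mulVec_sub, ← h2]; abel
    exact sub_eq_zero.mp h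
  have eW : W = A⁻¹ *ᵥ (AΓ *ᵥ (RΓ *ᵥ W)) := by
    rw [← e2, Matrix.mulVec_mulVec, Matrix.nonsing_inv_mul A hA, Matrix.one_mulVec]
  have eM : M *ᵥ (RΓ *ᵥ W) = RΓ *ᵥ W := by
    rw [hM, ← Matrix.mulVec_mulVec, ← Matrix.mulVec_mulVec, ← eW]
  have hr : RΓ *ᵥ W = 0 := by
    apply Matrix.mulVec_injective_of_isUnit hIM
    rw [Matrix.sub_mulVec, Matrix.one_mulVec, eM, sub_self, Matrix.mulVec_zero]
  refine ⟨?_, h1, ?_⟩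
  · rw [eW, hr, Matrix.mulVec_zero, Matrix.mulVec_zero]
  · rw [hr] at e3
    exact (sub_eq_zero.mp e3.symm).symm
end

section
/- Let A be an invertible n×n real matrix, A_Γ an n×m real matrix, R_Γ an m×n real matrix, M = R_Γ·A⁻¹·A_Γ, and F : n → ℝ. Assume I_m − M is invertible. If g ∈ ℝᵐ satisfies the ICDD Schur complement system (I_m − M²)·g = (I_m − M)·R_Γ·A⁻¹·F and U := A⁻¹·(F − A_Γ·g) is the final primal solve, then (U, g) satisfies the reduced coupled system: A·U + A_Γ·g = F and g = R_Γ·U. -/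
open Matrix

theorem icdd_schur_solution_gives_reduced_system
    {n m : Type*} [Fintype n] [Fintype m] [DecidableEq n] [DecidableEq m]
    (A : Matrix n n ℝ) (AΓ : Matrix n m ℝ) (RΓ : Matrix m n ℝ)
    (hA : IsUnit A.det)
    (M : Matrix m m ℝ) (hM : M = RΓ * A⁻¹ * AΓ)
    (hIM : IsUnit (1 - M))
    (F : n → ℝ) (g : m → ℝ)
    (hg : (1 - M ^ 2).mulVec g = ((1 - M) * RΓ * A⁻¹).mulVec F)
    (U : n → ℝ)
    (hU : U = A⁻¹.mulVec (F - AΓ.mulVec g)) :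
    A.mulVec U + AΓ.mulVec g = F ∧ g = RΓ.mulVec U := by
  have h1 : (1 - M).mulVec ((1 + M).mulVec g) = (1 - M).mulVec ((RΓ * A⁻¹).mulVec F) := by
    rw [Matrix.mulVec_mulVec, Matrix.mulVec_mulVec, ← Matrix.mul_assoc, ← hg]
    congr 1
    noncomm_ring
  have h2 := Matrix.mulVec_injective_of_isUnit hIM h1
  constructor
  · rw [hU, Matrix.mulVec_mulVec, Matrix.mul_nonsing_inv A hA, Matrix.one_mulVec, sub_add_cancel]
  · rw [hU, Matrix.mulVec_mulVec, Matrix.mulVec_sub, ← h2, Matrix.mulVec_mulVec, ← hM,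
      Matrix.add_mulVec, Matrix.one_mulVec, add_sub_cancel_right]
end
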